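/- Let P be a terminal simplicial reflexive d-polytope and F a facet of P such that there are exactly d vertices of P in the hyperplane H(F,0) = {x | ⟨u_F, x⟩ = 0}. Then every vertex of P in H(F,0) is of the form -y + z for some vertices y, z of F with y ≠ z, and moreover the map sending each such vertex to the corresponding y is a bijection between V(P) ∩ H(F,0) and V(F). -/

import Mathlib

/-!
Write each vertex of `P` in coordinates with respect to the basis `V(F)` of `ℝ^d`. A vertex `x`
with `⟨u_F, x⟩ = 0` has coordinates summing to zero, so some coordinate, say the one at `v ∈ V(F)`,
is negative. Tilting `u_F` by `-t` times the `v`-th coordinate functional, as far as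
it stays at most `1` on `P`, yields the neighbouring facet `F'` through `V(F) \ {v}`. Its functional is
integral and takes a positive value, at most `1`, at `x`, so `x ∈ F'`; as `F'` is a simplex, `x` is
determined by `v`, and integrality of `1 - t` gives that the `v`-th coordinate is at least `-1`
(`eq_and_neg_one_le_of_repr_neg`).

Hence choosing a negative coordinate is an injection from the `d` vertices in `H(F,0)` to the `d`
vertices of `F`. It is therefore bijective, and every such `x` has only one negative coordinate. So
`x + v` has nonnegative coordinates summing to one, i.e. it is a lattice point of `F`, and
terminality makes it a vertex `z` of `F`.
-/

open Finset

/-- A point of `ℝ^d` is a lattice point if all of its coordinates are integers. -/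
def IsLatticePt {d : ℕ} (x : Fin d → ℝ) : Prop := ∀ i, ∃ z : ℤ, x i = (z : ℝ)

/-- The pairing between `M_ℝ` and `N_ℝ`, both identified with `ℝ^d`. -/
noncomputable def pairing {d : ℕ} (u x : Fin d → ℝ) : ℝ := ∑ i, u i * x i

/-- The `i`-th standard basis vector of `ℝ^d`. -/
noncomputable def stdVec {d : ℕ} (i : Fin d) : Fin d → ℝ := Pi.single i 1

/-- A polytope in `ℝ^d`, given by its finite vertex set (each listed point is
required to be an extreme point of the convex hull, i.e. a genuine vertex). -/
structure Polytope (d : ℕ) where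
  verts : Finset (Fin d → ℝ)
  vertsExtreme : ∀ v ∈ verts,
    v ∈ Set.extremePoints ℝ (convexHull ℝ (verts : Set (Fin d → ℝ)))

namespace Polytope

variable {d : ℕ}

/-- The polytope as a subset of `ℝ^d`. -/
def carrier (P : Polytope d) : Set (Fin d → ℝ) :=
  convexHull ℝ (P.verts : Set (Fin d → ℝ))

/-- A proper face of `P`, cut out by a supporting hyperplane. -/
def IsFace (P : Polytope d) (F : Set (Fin d → ℝ)) : Prop :=
  ∃ u : Fin d → ℝ, u ≠ 0 ∧ ∃ c : ℝ,
    (∀ x ∈ P.carrier, pairing u x ≤ c) ∧ F = {x ∈ P.carrier | pairing u x = c}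

/-- A facet of `P`: a nonempty proper face of dimension `d - 1`. -/
def IsFacet (P : Polytope d) (F : Set (Fin d → ℝ)) : Prop :=
  P.IsFace F ∧ F.Nonempty ∧ Module.finrank ℝ (vectorSpan ℝ F) = d - 1

/-- The set of vertices of `P` lying on `F`. -/
def vertsOn (P : Polytope d) (F : Set (Fin d → ℝ)) : Set (Fin d → ℝ) :=
  {v | v ∈ P.verts ∧ v ∈ F}

/-- `P` is simplicial if every facet has exactly `d` vertices. -/
def IsSimplicial (P : Polytope d) : Prop :=
  ∀ F, P.IsFacet F → (P.vertsOn F).ncard = d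

/-- `P` is a lattice polytope. -/
def IsLattice (P : Polytope d) : Prop := ∀ v ∈ P.verts, IsLatticePt v

/-- `u` is the supporting functional `u_F` of the facet `F`, i.e. `⟨u, ·⟩ = 1` on `F`. -/
def IsUF (P : Polytope d) (F : Set (Fin d → ℝ)) (u : Fin d → ℝ) : Prop :=
  ∀ x ∈ F, pairing u x = 1

/-- `u` is the dual basis element `u_F^v`: it takes value `1` at the vertex `v` of `F`
and `0` at all other vertices of `F`. -/
def IsDualBasisElt (P : Polytope d) (F : Set (Fin d → ℝ)) (v : Fin d → ℝ)
    (u : Fin d → ℝ) : Prop :=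
  pairing u v = 1 ∧ ∀ w ∈ P.vertsOn F, w ≠ v → pairing u w = 0

/-- `P` is reflexive: it is a lattice polytope with `0` in its interior, and every
facet lies on a hyperplane `⟨u, ·⟩ = 1` with `u` integral (equivalently, the dual
polytope is a lattice polytope). -/
def IsReflexive (P : Polytope d) : Prop :=
  P.IsLattice ∧ 0 ∈ interior P.carrier ∧
    ∀ F, P.IsFacet F → ∃ u : Fin d → ℤ, P.IsUF F (fun i => (u i : ℝ))

/-- `P` is terminal: the only lattice points of `P` are its vertices and the origin. -/
def IsTerminal (P : Polytope d) : Prop :=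
  ∀ x ∈ P.carrier, IsLatticePt x → x = 0 ∨ x ∈ P.verts

/-- `F'` is the neighboring facet `N(F, v)`: the facet different from `F` containing
all vertices of `F` except `v`. -/
def IsNeighborFacet (P : Polytope d) (F : Set (Fin d → ℝ)) (v : Fin d → ℝ)
    (F' : Set (Fin d → ℝ)) : Prop :=
  P.IsFacet F' ∧ F' ≠ F ∧ ∀ w ∈ P.vertsOn F, w ≠ v → w ∈ F'

/-- `y` is the neighboring vertex `n(F, v)`: the unique vertex of `N(F, v)` not on `F`. -/
def IsNeighborVertex (P : Polytope d) (F : Set (Fin d → ℝ)) (v : Fin d → ℝ)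
    (y : Fin d → ℝ) : Prop :=
  ∃ F', P.IsNeighborFacet F v F' ∧ y ∈ P.vertsOn F' ∧ y ∉ F

/-- `F` is a special facet of `P`: the sum of all vertices of `P` is a nonnegative
linear combination of the vertices of `F`, i.e. `⟨u_F^w, ν_P⟩ ≥ 0` for every vertex
`w` of `F`. -/
def IsSpecialFacet (P : Polytope d) (F : Set (Fin d → ℝ)) : Prop :=
  P.IsFacet F ∧ ∀ w ∈ P.vertsOn F, ∀ uFw : Fin d → ℝ,
    P.IsDualBasisElt F w uFw → 0 ≤ pairing uFw (∑ v ∈ P.verts, v)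

end Polytope

/-- `S` is a `ℤ`-basis of the lattice `ℤ^d ⊆ ℝ^d`. -/
def IsLatticeBasis {d : ℕ} (S : Set (Fin d → ℝ)) : Prop :=
  ∃ v : Fin d → (Fin d → ℝ), Set.range v = S ∧
    ∀ x : Fin d → ℝ, (IsLatticePt x ↔ ∃ a : Fin d → ℤ, x = ∑ i, (a i : ℝ) • v i)

/-! ### The pairing as a linear functional -/

/-- The linear functional `⟨u, ·⟩`. -/
noncomputable def pairingLin {d : ℕ} (u : Fin d → ℝ) : (Fin d → ℝ) →ₗ[ℝ] ℝ where
  toFun := pairing u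
  map_add' x y := by simp [pairing, mul_add, Finset.sum_add_distrib]
  map_smul' c x := by
    simp only [pairing, Pi.smul_apply, smul_eq_mul, RingHom.id_apply, Finset.mul_sum]
    exact Finset.sum_congr rfl fun i _ => by ring

@[simp] lemma pairingLin_apply {d : ℕ} (u x : Fin d → ℝ) : pairingLin u x = pairing u x := rfl

lemma exists_pairing_eq {d : ℕ} (f : (Fin d → ℝ) →ₗ[ℝ] ℝ) : ∃ u, ∀ x, pairing u x = f x := by
  refine ⟨fun i => f (Pi.single i 1), fun x => ?_⟩
  rw [LinearMap.pi_apply_eq_sum_univ f x]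
  refine Finset.sum_congr rfl fun i _ => ?_
  rw [smul_eq_mul, mul_comm]
  refine congrArg (fun z => x i * f z) ?_
  funext j
  simp [Pi.single_apply, eq_comm]

lemma pairing_eq_of_span {d : ℕ} {u u' : Fin d → ℝ} {S : Set (Fin d → ℝ)}
    (hS : Submodule.span ℝ S = ⊤) (h : ∀ x ∈ S, pairing u x = pairing u' x) (x : Fin d → ℝ) :
    pairing u x = pairing u' x := by
  have : pairingLin u = pairingLin u' := LinearMap.ext_on hS h
  exact congrArg (fun f => f x) this

lemma exists_int_pairing {d : ℕ} (u : Fin d → ℤ) {x : Fin d → ℝ} (hx : IsLatticePt x) :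
    ∃ n : ℤ, pairing (fun i => (u i : ℝ)) x = n := by
  choose z hz using hx
  exact ⟨∑ i, u i * z i, by simp [pairing, hz]⟩

namespace Polytope

variable {d : ℕ}

/-! ### Facets and spanning sets -/

lemma pairing_le_of_verts (P : Polytope d) {u : Fin d → ℝ} {c : ℝ}
    (h : ∀ y ∈ P.verts, pairing u y ≤ c) : ∀ x ∈ P.carrier, pairing u x ≤ c := fun _ hx =>
  convexHull_min (s := (P.verts : Set (Fin d → ℝ))) h
    (convex_halfSpace_le (pairingLin u).isLinear c) hx

/-- A supporting face lies in the linear span of its vertices: in a convex combination of vertices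
attaining the maximum of the functional, only maximal vertices carry weight. -/
lemma face_subset_span (P : Polytope d) {u : Fin d → ℝ} {c : ℝ}
    (h : ∀ x ∈ P.carrier, pairing u x ≤ c) :
    {x ∈ P.carrier | pairing u x = c} ⊆
      Submodule.span ℝ (P.vertsOn {x ∈ P.carrier | pairing u x = c}) := by
  rintro p ⟨hp, hpc⟩
  obtain ⟨w, hw0, hw1, hwp⟩ := Finset.mem_convexHull'.1 hp
  have hv : ∀ y ∈ P.verts, y ∈ P.carrier := fun y hy => subset_convexHull ℝ _ hy
  have hsum : ∑ y ∈ P.verts, w y * (c - pairing u y) = 0 := by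
    have h1 : pairing u p = ∑ y ∈ P.verts, w y * pairing u y := by
      rw [← pairingLin_apply, ← hwp, map_sum]; simp
    simp only [mul_sub, Finset.sum_sub_distrib, ← Finset.sum_mul, hw1, ← h1, hpc]
    ring
  have hz := (Finset.sum_eq_zero_iff_of_nonneg fun y hy =>
    mul_nonneg (hw0 y hy) (sub_nonneg.2 (h y (hv y hy)))).1 hsum
  rw [← hwp]
  refine Submodule.sum_mem _ fun y hy => ?_
  rcases mul_eq_zero.1 (hz y hy) with h0 | h0
  · simp [h0]
  · exact Submodule.smul_mem _ _ (Submodule.subset_span ⟨hy, hv y hy, by linarith⟩)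

lemma vectorSpan_le_ker {u : Fin d → ℝ} {c : ℝ} {F : Set (Fin d → ℝ)}
    (h : ∀ x ∈ F, pairing u x = c) : vectorSpan ℝ F ≤ LinearMap.ker (pairingLin u) := by
  refine Submodule.span_le.2 ?_
  rintro _ ⟨x, hx, y, hy, rfl⟩
  change x - y ∈ LinearMap.ker (pairingLin u)
  rw [LinearMap.mem_ker, map_sub, pairingLin_apply, pairingLin_apply,
    h x hx, h y hy, sub_self]

/-- A facet of a polytope around the origin is cut out by a functional with maximum `1`, and its
vertices span the ambient space. -/
lemma IsFacet.exists_functional {P : Polytope d} (h0 : 0 ∈ interior P.carrier)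
    {F : Set (Fin d → ℝ)} (hF : P.IsFacet F) :
    ∃ u, (∀ x ∈ P.carrier, pairing u x ≤ 1) ∧ F = {x ∈ P.carrier | pairing u x = 1} ∧
      Submodule.span ℝ (P.vertsOn F) = ⊤ := by
  obtain ⟨⟨u, hu, c, hc, rfl⟩, ⟨p, hp⟩, hdim⟩ := hF
  have hcpos : 0 < c := by
    have hcont : Filter.Tendsto (fun t : ℝ => t • u) (nhds 0) (nhds 0) := by
      have : Continuous (fun t : ℝ => t • u) := by fun_prop
      simpa using this.tendsto 0
    have hev := (hcont.eventually (mem_interior_iff_mem_nhds.1 h0)).filter_mono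
      (nhdsWithin_le_nhds (s := Set.Ioi 0))
    obtain ⟨t, ht, ht0⟩ := (hev.and self_mem_nhdsWithin).exists
    have h1 : t * pairing u u ≤ c := by
      have := hc _ ht
      rwa [← pairingLin_apply, map_smul] at this
    have h2 : 0 < pairing u u := by
      obtain ⟨i, hi⟩ := Function.ne_iff.1 hu
      exact Finset.sum_pos' (fun i _ => mul_self_nonneg _)
        ⟨i, Finset.mem_univ _, mul_self_pos.2 hi⟩
    exact (mul_pos ht0 h2).trans_le h1
  have hspan : Submodule.span ℝ (P.vertsOn {x ∈ P.carrier | pairing u x = c}) = ⊤ := by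
    set F := {x ∈ P.carrier | pairing u x = c} with hFdef
    have hFs : F ⊆ Submodule.span ℝ (P.vertsOn F) := P.face_subset_span hc
    have hlt : vectorSpan ℝ F < Submodule.span ℝ (P.vertsOn F) := by
      refine lt_of_le_of_ne ?_ ?_
      · refine Submodule.span_le.2 ?_
        rintro _ ⟨x, hx, y, hy, rfl⟩
        exact Submodule.sub_mem _ (hFs hx) (hFs hy)
      · intro he
        have : p ∈ LinearMap.ker (pairingLin u) :=
          vectorSpan_le_ker (fun x hx => hx.2) (he ▸ hFs hp)
        rw [LinearMap.mem_ker, pairingLin_apply, hp.2] at this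
        exact hcpos.ne' this
    have hlt' := Submodule.finrank_lt_finrank_of_lt hlt
    have hle := Submodule.finrank_le (Submodule.span ℝ (P.vertsOn F))
    refine Submodule.eq_top_of_finrank_eq ?_
    rw [Module.finrank_fin_fun] at *
    omega
  have hs : ∀ x, pairing (c⁻¹ • u) x = c⁻¹ * pairing u x := fun x => by
    simp [pairing, Finset.mul_sum, mul_assoc]
  refine ⟨c⁻¹ • u, fun x hx => ?_, ?_, hspan⟩
  · rw [hs, inv_mul_le_iff₀ hcpos, mul_one]; exact hc x hx
  · ext x
    simp only [Set.mem_ofPred_eq, hs, inv_mul_eq_iff_eq_mul₀ hcpos.ne', mul_one]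

/-- Conversely, a functional with maximum `1` on `P` cuts out a facet as soon as the points where
it equals `1` span the ambient space. -/
lemma isFacet_of_span (P : Polytope d) {u : Fin d → ℝ} (hd : d ≠ 0)
    (hu : ∀ x ∈ P.carrier, pairing u x ≤ 1)
    (hspan : Submodule.span ℝ {x ∈ P.carrier | pairing u x = 1} = ⊤) :
    P.IsFacet {x ∈ P.carrier | pairing u x = 1} := by
  set F := {x ∈ P.carrier | pairing u x = 1} with hFdef
  have : NeZero d := ⟨hd⟩
  have hne : F.Nonempty := by
    rw [Set.nonempty_iff_ne_empty]
    intro he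
    rw [he, Submodule.span_empty] at hspan
    exact bot_ne_top hspan
  obtain ⟨p, hp⟩ := hne
  have hu0 : u ≠ 0 := by
    rintro rfl
    have := hp.2
    simp [pairing] at this
  refine ⟨⟨u, hu0, 1, hu, rfl⟩, ⟨p, hp⟩, ?_⟩
  have hlt : vectorSpan ℝ F < ⊤ := by
    refine lt_top_iff_ne_top.2 fun he => ?_
    have : p ∈ LinearMap.ker (pairingLin u) :=
      vectorSpan_le_ker (F := F) (fun x hx => hx.2) (he ▸ Submodule.mem_top)
    rw [LinearMap.mem_ker, pairingLin_apply, hp.2] at this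
    exact one_ne_zero this
  have h1 := Submodule.finrank_lt hlt.ne
  have hle : (⊤ : Submodule ℝ (Fin d → ℝ)) ≤ vectorSpan ℝ F ⊔ Submodule.span ℝ {p} := by
    rw [← hspan]
    refine Submodule.span_le.2 fun x hx => ?_
    rw [← sub_add_cancel x p]
    exact Submodule.add_mem _ (Submodule.mem_sup_left (vsub_mem_vectorSpan ℝ hx hp))
      (Submodule.mem_sup_right (Submodule.mem_span_singleton_self p))
  have h2 := (Submodule.finrank_mono hle).trans (Submodule.finrank_add_le_finrank_add_finrank _ _)
  have h3 := finrank_span_singleton (K := ℝ) (v := p) (by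
    rintro rfl
    have := hp.2
    simp [pairing] at this)
  rw [finrank_top] at h2
  rw [Module.finrank_fin_fun] at h1 h2
  omega

/-! ### Tilting to the neighbouring facet -/

/-- Two vertices in `H(F,0)` whose `v`-th coordinate is negative agree, and this coordinate is at
least `-1`. -/
lemma eq_and_neg_one_le_of_repr_neg {P : Polytope d} (hd : d ≠ 0)
    (hrefl : P.IsReflexive) (hsimp : P.IsSimplicial) {F : Set (Fin d → ℝ)} (hF : P.IsFacet F)
    {u : Fin d → ℝ} (hu : ∀ x ∈ P.carrier, pairing u x ≤ 1)
    (hFu : F = {x ∈ P.carrier | pairing u x = 1})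
    (b : Module.Basis (P.vertsOn F) ℝ (Fin d → ℝ)) (hb : ∀ v, b v = v) (v : P.vertsOn F)
    {x x' : Fin d → ℝ} (hx : x ∈ P.verts) (hx' : x' ∈ P.verts)
    (hx0 : pairing u x = 0) (hx0' : pairing u x' = 0)
    (hxv : b.repr x v < 0) (hxv' : b.repr x' v < 0) :
    x = x' ∧ -1 ≤ b.repr x v := by
  classical
  have hvc : ∀ y ∈ P.verts, y ∈ P.carrier := fun y hy => subset_convexHull ℝ _ hy
  have hFone : ∀ w : P.vertsOn F, pairing u w = 1 := fun w => by
    have h : ∀ y ∈ F, pairing u y = 1 := by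
      rw [hFu]
      exact fun y hy => hy.2
    exact h w w.2.2
  have hnotF : ∀ y, b.repr y v < 0 → y ∉ P.vertsOn F := by
    intro y hy hyF
    have : b.repr y v = if (⟨y, hyF⟩ : P.vertsOn F) = v then 1 else 0 := by
      have h := b.repr_self ⟨y, hyF⟩
      rw [hb] at h
      simp only at h
      rw [h, Finsupp.single_apply]
    rw [this] at hy
    split_ifs at hy <;> linarith
  -- `t` is the largest tilt of `u` along the `v`-th coordinate that still supports `P`.
  obtain ⟨y₀, hy₀, hmin⟩ := (P.verts.filter fun y => b.repr y v < 0).exists_min_image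
    (fun y => (1 - pairing u y) / (-b.repr y v)) ⟨x, by simp [hx, hxv]⟩
  rw [Finset.mem_filter] at hy₀
  set t := (1 - pairing u y₀) / (-b.repr y₀ v) with ht
  have htpos : 0 < t := by
    refine div_pos (sub_pos.2 (lt_of_le_of_ne (hu _ (hvc _ hy₀.1)) fun h => ?_)) (by linarith)
    exact hnotF _ hy₀.2 ⟨hy₀.1, by rw [hFu]; exact ⟨hvc _ hy₀.1, h⟩⟩
  obtain ⟨u', hu'⟩ := exists_pairing_eq (pairingLin u - t • b.coord v)
  replace hu' : ∀ z, pairing u' z = pairing u z - t * b.repr z v := fun z => by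
    rw [hu']; simp
  have hle : ∀ z ∈ P.carrier, pairing u' z ≤ 1 := by
    refine P.pairing_le_of_verts fun y hy => ?_
    rw [hu']
    by_cases hyv : b.repr y v < 0
    · have := hmin y (by simp [hy, hyv])
      rw [le_div_iff₀ (by linarith)] at this
      linarith
    · have := hu y (hvc y hy)
      have := mul_nonneg htpos.le (not_lt.1 hyv)
      linarith
  set F' := {z ∈ P.carrier | pairing u' z = 1} with hF'
  have hy₀F' : y₀ ∈ F' := by
    refine ⟨hvc _ hy₀.1, ?_⟩
    rw [hu', ht]
    have : b.repr y₀ v ≠ 0 := hy₀.2.ne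
    field_simp
    ring
  have hwF' : ∀ w : P.vertsOn F, w ≠ v → (w : Fin d → ℝ) ∈ F' := by
    intro w hw
    refine ⟨hvc _ w.2.1, ?_⟩
    rw [hu', hFone]
    have h := b.repr_self w
    rw [hb] at h
    simp [h, hw]
  have hspan : Submodule.span ℝ F' = ⊤ := by
    rw [eq_top_iff, ← b.span_eq]
    refine Submodule.span_le.2 ?_
    have hw : ∀ w, w ≠ v → b w ∈ Submodule.span ℝ F' := fun w hw => by
      rw [hb]; exact Submodule.subset_span (hwF' w hw)
    rintro _ ⟨w, rfl⟩
    by_cases hwv : w = v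
    · subst hwv
      have hsum : b.repr y₀ w • b w ∈ Submodule.span ℝ F' := by
        have : Fintype (P.vertsOn F) := (P.verts.finite_toSet.subset fun _ h => h.1).fintype
        have h := b.sum_repr y₀
        rw [← Finset.add_sum_erase _ _ (Finset.mem_univ w), ← eq_sub_iff_add_eq] at h
        rw [h]
        exact Submodule.sub_mem _ (Submodule.subset_span hy₀F')
          (Submodule.sum_mem _ fun i hi => Submodule.smul_mem _ _ (hw i (Finset.ne_of_mem_erase hi)))
      exact (Submodule.smul_mem_iff _ hy₀.2.ne).1 hsum
    · exact hw w hwv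
  have hfac : P.IsFacet F' := P.isFacet_of_span hd hle hspan
  obtain ⟨n, hn⟩ := hrefl.2.2 F' hfac
  have hint : ∀ y ∈ P.verts, ∃ m : ℤ, pairing u' y = m := fun y hy => by
    rw [pairing_eq_of_span hspan (u' := fun i => (n i : ℝ)) fun z hz => hz.2.trans (hn z hz).symm]
    exact exists_int_pairing n (hrefl.1 y hy)
  have hone : ∀ y ∈ P.verts, pairing u y = 0 → b.repr y v < 0 → pairing u' y = 1 := by
    intro y hy hy0 hyv
    obtain ⟨m, hm⟩ := hint y hy
    have h1 := hle y (hvc y hy)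
    have h2 : 0 < pairing u' y := by
      rw [hu', hy0]
      have := mul_neg_of_pos_of_neg htpos hyv
      linarith
    rw [hm] at h1 h2 ⊢
    have h1' : m ≤ 1 := by exact_mod_cast h1
    have h2' : 0 < m := by exact_mod_cast h2
    exact_mod_cast (by omega : m = 1)
  have h1x := hone x hx hx0 hxv
  refine ⟨?_, ?_⟩
  · by_contra hne
    have hfin : ∀ G, (P.vertsOn G).Finite := fun G => P.verts.finite_toSet.subset fun _ h => h.1
    have hsub : insert x (insert x' (P.vertsOn F \ {↑v})) ⊆ P.vertsOn F' := by
      rintro z (rfl | rfl | ⟨hz, hzv⟩)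
      · exact ⟨hx, hvc _ hx, h1x⟩
      · exact ⟨hx', hvc _ hx', hone _ hx' hx0' hxv'⟩
      · exact ⟨hz.1, hwF' ⟨z, hz⟩ fun h => hzv (by rw [← h]; rfl)⟩
    have hcard := Set.ncard_le_ncard hsub (hfin F')
    have hfd : (P.vertsOn F \ {(v : Fin d → ℝ)}).Finite := (hfin F).sdiff
    rw [Set.ncard_insert_of_notMem _ (hfd.insert _),
      Set.ncard_insert_of_notMem (fun h => hnotF _ hxv' h.1) hfd, hsimp F' hfac] at hcard
    · have := Set.ncard_sdiff_singleton_add_one v.2 (hfin F)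
      rw [hsimp F hF] at this
      omega
    · rintro (h | h)
      · exact hne h
      · exact hnotF _ hxv h.1
  · obtain ⟨m, hm⟩ := hint v v.2.1
    have h := b.repr_self v
    rw [hb] at h
    rw [hu', hFone, h] at hm
    simp only [Finsupp.single_eq_same, mul_one] at hm
    have h2 : m < 1 := by
      have : (m : ℝ) < 1 := by linarith
      exact_mod_cast this
    have h3 : (m : ℝ) ≤ 0 := by exact_mod_cast (by omega : m ≤ 0)
    rw [hu', hx0] at h1x
    have ht1 : 1 ≤ t := by linarith
    nlinarith

end Polytope

/-! ### Vertices in `H(F,0)` -/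

/-- Lemma (`lemh02`), first part: if a facet `F` of a terminal simplicial reflexive
`d`-polytope has exactly `d` vertices of `P` in `H(F, 0)`, then each such vertex has
the form `-y + z` with `y ≠ z` vertices of `F`, and `x ↦ y` is a bijection from
`V(P) ∩ H(F, 0)` onto `V(F)`. -/
theorem vertices_on_H0_form {d : ℕ} (P : Polytope d)
    (hrefl : P.IsReflexive) (hsimp : P.IsSimplicial) (hterm : P.IsTerminal)
    (F : Set (Fin d → ℝ)) (hF : P.IsFacet F)
    (uF : Fin d → ℝ) (huF : P.IsUF F uF)
    (hd : {x | x ∈ P.verts ∧ pairing uF x = 0}.ncard = d) :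
    ∃ g : (Fin d → ℝ) → (Fin d → ℝ),
      (∀ x ∈ {x | x ∈ P.verts ∧ pairing uF x = 0},
        g x ∈ P.vertsOn F ∧ ∃ z ∈ P.vertsOn F, z ≠ g x ∧ x = -(g x) + z) ∧
      Set.BijOn g {x | x ∈ P.verts ∧ pairing uF x = 0} (P.vertsOn F) := by
  classical
  have hd0 : d ≠ 0 := by
    rintro rfl
    obtain ⟨⟨u, hu, -⟩, -⟩ := hF
    exact hu (Subsingleton.elim _ _)
  obtain ⟨u, hu, hFu, hspan⟩ := hF.exists_functional hrefl.2.1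
  have huu : ∀ x, pairing uF x = pairing u x := pairing_eq_of_span hspan fun x hx => by
    have h := hx.2
    rw [huF x h]
    rw [hFu] at h
    exact h.2.symm
  simp only [huu] at hd ⊢
  have hvc : ∀ y ∈ P.verts, y ∈ P.carrier := fun y hy => subset_convexHull ℝ _ hy
  have hfin : (P.vertsOn F).Finite := P.verts.finite_toSet.subset fun _ h => h.1
  have : Fintype (P.vertsOn F) := hfin.fintype
  have hcard := hsimp F hF
  let b : Module.Basis (P.vertsOn F) ℝ (Fin d → ℝ) :=
    basisOfTopLeSpanOfCardEqFinrank (fun v => (v : Fin d → ℝ)) (by simp [hspan]) (by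
      rw [Module.finrank_fin_fun, ← Nat.card_eq_fintype_card]
      exact hcard)
  have hb : ∀ v, b v = v := fun v => by simp [b]
  have hFone : ∀ w : P.vertsOn F, pairing u w = 1 := fun w => by
    have h : ∀ y ∈ F, pairing u y = 1 := by
      rw [hFu]
      exact fun y hy => hy.2
    exact h w w.2.2
  have hsum : ∀ x, pairing u x = ∑ v, b.repr x v := fun x => by
    conv_lhs => rw [← b.sum_repr x]
    rw [← pairingLin_apply, map_sum]
    exact Finset.sum_congr rfl fun v _ => by simp [hb, hFone]
  -- The origin is interior, hence not an extreme point.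
  have hne0 : ∀ x ∈ P.verts, x ≠ 0 := by
    rintro x hx rfl
    have hd1 : NeZero d := ⟨hd0⟩
    have := (P.vertsExtreme 0 hx)
    exact Set.disjoint_left.1 (disjoint_interior_extremePoints _) hrefl.2.1 this
  have hneg : ∀ x, x ∈ P.verts ∧ pairing u x = 0 → ∃ v, b.repr x v < 0 := by
    rintro x ⟨hx, hx0⟩
    by_contra! h
    rw [hsum, Finset.sum_eq_zero_iff_of_nonneg fun v _ => h v] at hx0
    refine hne0 x hx (b.repr.map_eq_zero_iff.1 (Finsupp.ext fun v => ?_))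
    simpa using hx0 v (Finset.mem_univ _)
  have hnonempty : Nonempty (P.vertsOn F) :=
    (Set.nonempty_of_ncard_ne_zero (hcard.trans_ne hd0)).to_subtype
  choose! g hg using hneg
  have key := fun v x x' hx hx' hx0 hx0' =>
    P.eq_and_neg_one_le_of_repr_neg hd0 hrefl hsimp hF hu hFu b hb v (x := x) (x' := x')
      hx hx' hx0 hx0'
  have hmaps : Set.MapsTo (fun x => (g x : Fin d → ℝ)) {x | x ∈ P.verts ∧ pairing u x = 0}
      (P.vertsOn F) := fun x _ => (g x).2
  have hinj : Set.InjOn (fun x => (g x : Fin d → ℝ)) {x | x ∈ P.verts ∧ pairing u x = 0} := by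
    intro x hx x' hx' h
    have h' : g x = g x' := Subtype.ext h
    exact (key (g x) x x' hx.1 hx'.1 hx.2 hx'.2 (hg x hx) (h' ▸ hg x' hx')).1
  have himg : (fun x => (g x : Fin d → ℝ)) '' {x | x ∈ P.verts ∧ pairing u x = 0} =
      P.vertsOn F := by
    refine Set.eq_of_subset_of_ncard_le hmaps.image_subset ?_ hfin
    rw [hinj.ncard_image, hd, hcard]
  refine ⟨fun x => g x, fun x hx => ⟨(g x).2, ?_⟩, hmaps, hinj, himg.ge⟩
  -- By surjectivity any negative coordinate `v` of `x` is `g x'` for some `x'`, forcing `x' = x`.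
  have honly : ∀ v, v ≠ g x → 0 ≤ b.repr x v := by
    intro v hv
    by_contra! h
    obtain ⟨x', hx', hgx'⟩ := himg.ge v.2
    have hgx'' : g x' = v := Subtype.ext hgx'
    have := (key v x x' hx.1 hx'.1 hx.2 hx'.2 h (hgx'' ▸ hg x' hx')).1
    exact hv (by rw [this, hgx''])
  have hge := (key (g x) x x hx.1 hx.1 hx.2 hx.2 (hg x hx) (hg x hx)).2
  have hone : pairing u ((g x : Fin d → ℝ) + x) = 1 := by
    rw [← pairingLin_apply, map_add, pairingLin_apply, pairingLin_apply, hFone, hx.2, add_zero]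
  have hmem : (g x : Fin d → ℝ) + x ∈ P.carrier := by
    rw [← b.sum_repr ((g x : Fin d → ℝ) + x)]
    refine (convex_convexHull ℝ _).sum_mem (fun v _ => ?_) ?_ fun v _ => ?_
    · have h := b.repr_self (g x)
      rw [hb] at h
      rw [map_add, h, Finsupp.add_apply, Finsupp.single_apply]
      split_ifs with hv
      · subst hv; linarith
      · rw [zero_add]; exact honly v (Ne.symm hv)
    · rw [← hsum, hone]
    · rw [hb]; exact hvc _ v.2.1
  have hlat : IsLatticePt ((g x : Fin d → ℝ) + x) := fun i => by
    obtain ⟨m, hm⟩ := hrefl.1 _ (g x).2.1 i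
    obtain ⟨n, hn⟩ := hrefl.1 _ hx.1 i
    exact ⟨m + n, by simp [hm, hn]⟩
  refine ⟨(g x : Fin d → ℝ) + x, ⟨?_, hFu.ge ⟨hmem, hone⟩⟩, ?_, ?_⟩
  · refine (hterm _ hmem hlat).resolve_left fun h => ?_
    rw [h] at hone
    simp [pairing] at hone
  · intro h
    exact hne0 x hx.1 (by simpa using h)
  · simp
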